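/- arXiv:1404.1153 — 2 statements merged into one kernel-verified Lean document; each statement's English description precedes it below -/
import Mathlib

section
/- Let k ≥ 3 and let G = (V,E) be a tree with n vertices whose maximal degree satisfies d_max(G) ≤ n/k. Then G is strongly k-balanced. -/
/-!
Write `n` for the number of vertices and `q = n / k` (rounded down). It is shown that every forest
with maximal degree at most `q` and with `k * q ≤ n ≤ k * (q + 1)` has a proper `k`-coloring whose
classes all have size `q` or `q + 1`. A larger side of a bipartition has at least `n / 2` vertices,
so for `k > 3` a single color class can be taken out of it, and induction on `k` reduces the claim to
`k = 3`, with prescribed class sizes `s₁ ≥ s₂ ≥ s₃`, where `s₃ ≥ q` and `s₁ ≤ q + 1`.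

For `k = 3` let `A`, `B` be a bipartition with `#B ≤ #A`.

* If `#B ≥ s₁` (`exists_three_classes_of_large`), one class lies in `B`, one in `A`, and the third
  consists of `T ⊆ B` with `#T = #B - s₁` and of vertices of `A` not adjacent to `T`. There are fewer
  than `n` edges, so `T` can be chosen with at most `n * #T / #B` edges at it; as `#B ≤ n / 2`, this
  is small enough for `A` to contain the required number of vertices not adjacent to `T`.
* If `#B ≤ s₃` (`exists_three_classes_of_small`), `B` is split into `S` and `B \ S`, which become parts
  of two different classes, and `A` fills up these two classes and forms the third. By Hall's theorem
  it suffices that `S` has enough private neighbors, not too many neighbors, and that few vertices of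
  `A` are adjacent to both parts. `SparseBetween.exists_split` finds such an `S`: either a single
  vertex, which works since its degree is at most `s₃`, or a minimal set with enough private
  neighbors. In the latter case sparsity gives a vertex of `S` sharing at most one neighbor with the
  rest of `S`, and its deletion shows that `S` barely has enough private neighbors.

Apart from the existence of a bipartition, acyclicity enters only through the bound on the number of
edges between two vertex sets
(`SimpleGraph.IsAcyclic.sum_card_adj_add_one_le`).
-/

open SimpleGraph

/-- A finite simple graph is *strongly k-balanced* if there is a coloring of the vertices
with k colors such that no edge has both endpoints of the same color and the numbers of
vertices of any two colors differ by at most 1. -/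
def StronglyKBalanced (k : ℕ) {V : Type*} (G : SimpleGraph V) : Prop :=
  ∃ c : V → Fin k,
    (∀ u w : V, G.Adj u w → c u ≠ c w) ∧
    ∀ i j : Fin k,
      |(({v | c v = i} : Set V).ncard : ℤ) - (({v | c v = j} : Set V).ncard : ℤ)| ≤ 1

open Finset in
/-- In a forest, the number of edges between disjoint sets `X` and `Y ≠ ∅` is less than `#X + #Y`:
the forest induced on `X ∪ Y` extends to a spanning tree of the complete graph on `X ∪ Y`. -/
lemma SimpleGraph.IsAcyclic.sum_card_adj_add_one_le {V : Type*} [Fintype V] [DecidableEq V]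
    {G : SimpleGraph V} [DecidableRel G.Adj] (hG : G.IsAcyclic) (X Y : Finset V)
    (hXY : Disjoint X Y) (hne : Y.Nonempty) :
    ∑ y ∈ Y, #{x ∈ X | G.Adj y x} + 1 ≤ #X + #Y := by
  classical
  set Z : Set V := ↑(X ∪ Y) with hZ
  obtain ⟨y₀, hy₀⟩ := hne
  have : Nonempty Z := ⟨⟨y₀, by simp [hZ, hy₀]⟩⟩
  have hac : (G.induce Z).IsAcyclic := hG.induce Z
  obtain ⟨T, hT, -, hTt⟩ := (SimpleGraph.connected_top (V := Z)).exists_isTree_le_of_le_of_isAcyclic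
    (H := G.induce Z) le_top hac
  have hcard := hTt.card_edgeFinset
  have hZc : Fintype.card Z = #X + #Y := by
    rw [← card_union_of_disjoint hXY]; simp [hZ]
  rw [← card_sigma, ← hZc, ← hcard]
  refine Nat.add_le_add_right ?_ 1
  have hmem : ∀ p ∈ Y.sigma (fun y => {x ∈ X | G.Adj y x}), p.1 ∈ Y ∧ p.2 ∈ X ∧ G.Adj p.1 p.2 := by
    intro p hp
    simpa using hp
  have hy : ∀ {y}, y ∈ Y → y ∈ Z := fun h => by simp [hZ, h]
  have hx : ∀ {y}, y ∈ X → y ∈ Z := fun h => by simp [hZ, h]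
  refine card_le_card_of_injOn (fun p => if h : p.1 ∈ Y ∧ p.2 ∈ X then
    s((⟨p.1, hy h.1⟩ : Z), (⟨p.2, hx h.2⟩ : Z)) else s(⟨y₀, hy hy₀⟩, ⟨y₀, hy hy₀⟩)) ?_ ?_
  · intro p hp
    obtain ⟨h1, h2, h3⟩ := hmem p hp
    have : T.Adj (⟨p.1, hy h1⟩ : Z) (⟨p.2, hx h2⟩ : Z) := hT (by simpa using h3)
    simpa [h1, h2] using this
  · intro p hp r hr hpr
    obtain ⟨h1, h2, h3⟩ := hmem p hp
    obtain ⟨k1, k2, k3⟩ := hmem r hr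
    simp only [h1, h2, k1, k2, and_self, dif_pos, Sym2.eq_iff, Subtype.mk.injEq] at hpr
    rcases hpr with ⟨e1, e2⟩ | ⟨e1, e2⟩
    · exact Sigma.ext e1 (heq_of_eq e2)
    · exact absurd h1 (fun h => Finset.disjoint_left.1 hXY (e1 ▸ k2) h)

/-! ### Splitting a sparse bipartite graph into three classes -/

section Bipartite

open Finset

lemma sum_card_adj_comm {V : Type*} {G : SimpleGraph V} [DecidableRel G.Adj] (X Y : Finset V) :
    ∑ y ∈ Y, #{x ∈ X | G.Adj y x} = ∑ x ∈ X, #{y ∈ Y | G.Adj y x} :=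
  sum_card_bipartiteAbove_eq_sum_card_bipartiteBelow G.Adj

variable {V : Type*} [DecidableEq V]

/-- Between any `X ⊆ A` and any nonempty `Y ⊆ B` there are fewer than `#X + #Y` edges. This is the
only consequence of acyclicity used for a graph with bipartition `A`, `B`. -/
def SparseBetween (G : SimpleGraph V) [DecidableRel G.Adj] (A B : Finset V) : Prop :=
  ∀ X ⊆ A, ∀ Y ⊆ B, Y.Nonempty → ∑ y ∈ Y, #{x ∈ X | G.Adj y x} + 1 ≤ #X + #Y

/-- The vertices of `A` with a neighbor in `S`. -/
def nbrs (G : SimpleGraph V) [DecidableRel G.Adj] (A S : Finset V) : Finset V :=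
  {x ∈ A | ∃ u ∈ S, G.Adj u x}

/-- The vertices of `A` with no neighbor in `B` outside `S`. For a bipartition `A`, `B` this includes
the isolated vertices of `A`. -/
def privateNbrs (G : SimpleGraph V) [DecidableRel G.Adj] (A B S : Finset V) : Finset V :=
  A \ nbrs G A (B \ S)

variable {G : SimpleGraph V} [DecidableRel G.Adj] {A B : Finset V}

/-- The vertices of `A` adjacent both to `S` and to `B \ S` have at least two neighbors in `B`
each, so sparsity bounds their number. -/
lemma SparseBetween.card_shared_lt (h : SparseBetween G A B) {S : Finset V} (hS : S ⊆ B)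
    (hB : B.Nonempty) : #(nbrs G A S ∩ nbrs G A (B \ S)) < #B := by
  set I := nbrs G A S ∩ nbrs G A (B \ S) with hI
  have h1 := h I (inter_subset_left.trans (filter_subset _ _)) B subset_rfl hB
  rw [sum_card_adj_comm] at h1
  have h2 : #I * 2 ≤ ∑ x ∈ I, #{y ∈ B | G.Adj y x} := by
    rw [← smul_eq_mul]
    refine card_nsmul_le_sum _ _ _ fun x hx => ?_
    simp only [hI, nbrs, mem_inter, mem_filter, mem_sdiff] at hx
    obtain ⟨⟨_, u, hu, hux⟩, _, w, ⟨hw, hwS⟩, hwx⟩ := hx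
    have : ({u, w} : Finset V) ⊆ {y ∈ B | G.Adj y x} := by
      intro z hz
      simp only [mem_insert, mem_singleton] at hz
      rcases hz with rfl | rfl
      · simp [hS hu, hux]
      · simp [hw, hwx]
    calc 2 = #({u, w} : Finset V) := (card_pair (by rintro rfl; exact hwS hu)).symm
      _ ≤ _ := card_le_card this
  omega

/-- Some vertex of `S` shares at most one of its neighbors in `A` with the rest of `S`. Otherwise `S`
and the vertices of `A` with two neighbors in `S` would induce a graph of minimum degree at least 2. -/
lemma SparseBetween.exists_card_shared_le_one (h : SparseBetween G A B) {S : Finset V}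
    (hS : S ⊆ B) (hne : S.Nonempty) :
    ∃ v ∈ S, #{x ∈ A | G.Adj v x ∧ ∃ u ∈ S, u ≠ v ∧ G.Adj u x} ≤ 1 := by
  by_contra! hcon
  set X : Finset V := {x ∈ A | 2 ≤ #{y ∈ S | G.Adj y x}} with hX
  have h1 := h X (filter_subset _ _) S hS hne
  have h2 : #S * 2 ≤ ∑ y ∈ S, #{x ∈ X | G.Adj y x} := by
    rw [← smul_eq_mul]
    refine card_nsmul_le_sum _ _ _ fun v hv => Nat.le_trans (hcon v hv) (card_le_card ?_)
    intro x hx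
    simp only [mem_filter] at hx
    obtain ⟨hxA, hvx, u, hu, huv, hux⟩ := hx
    simp only [hX, mem_filter]
    refine ⟨⟨hxA, ?_⟩, hvx⟩
    rw [← card_pair huv]
    refine card_le_card fun z hz => ?_
    simp only [mem_insert, mem_singleton] at hz
    rcases hz with rfl | rfl <;> simp_all
  have h3 : #X * 2 ≤ ∑ y ∈ S, #{x ∈ X | G.Adj y x} := by
    rw [sum_card_adj_comm, ← smul_eq_mul]
    exact card_nsmul_le_sum _ _ _ fun x hx => (mem_filter.1 hx).2
  omega

/-- A split of a small side `B` into `S` and `B \ S`, each of which can be completed to a color class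
by vertices of `A`. The three bounds are the Hall-type conditions for adding `s₁ - #(B \ S)` vertices
of `A` to `B \ S` and `s₂ - #S` other vertices of `A` to `S`.

If one vertex has more than `s₁ - #B` private neighbors, it can serve as `S`. Otherwise deleting a
suitable vertex changes the number of private neighbors only slightly, and a smallest `S` satisfying
the first bound does not overshoot the second. -/
lemma SparseBetween.exists_split (h : SparseBetween G A B)
    {s₁ s₂ s₃ : ℕ} (h12 : s₂ ≤ s₁) (h23 : s₃ ≤ s₂) (h13 : s₁ ≤ s₃ + 1)
    (hcard : #A + #B = s₁ + s₂ + s₃) (hb : #B ≤ s₃)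
    (hdeg : ∀ v ∈ B, #{x ∈ A | G.Adj v x} ≤ s₃) :
    ∃ S ⊆ B, s₁ + #S ≤ #(privateNbrs G A B S) + #B ∧
      #(nbrs G A S) + #B ≤ s₁ + s₃ + #S ∧
      #(nbrs G A S ∩ nbrs G A (B \ S)) ≤ s₃ := by
  by_cases hcase : ∃ v ∈ B, s₁ + 1 ≤ #(privateNbrs G A B {v}) + #B
  · -- Here `S = {v}`; the upper bounds hold because `v` has degree at most `s₃`.
    obtain ⟨v, hv, hv1⟩ := hcase
    have hN : nbrs G A {v} = {x ∈ A | G.Adj v x} := by simp [nbrs]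
    have hd := hdeg v hv
    refine ⟨{v}, by simpa using hv, by simpa using hv1, ?_, ?_⟩
    · rw [hN, card_singleton]; omega
    · exact (card_le_card inter_subset_left).trans (hN ▸ hd)
  push Not at hcase
  have hex : ∃ n, ∃ S ⊆ B, s₁ + #S ≤ #(privateNbrs G A B S) + #B ∧ #S = n := by
    refine ⟨#B, B, subset_rfl, ?_, rfl⟩
    have : privateNbrs G A B B = A := by simp [privateNbrs, nbrs]
    rw [this]; omega
  obtain ⟨S, hSB, hS, hSn⟩ := Nat.find_spec hex
  have hmin : ∀ T ⊆ B, #T < #S → ¬ s₁ + #T ≤ #(privateNbrs G A B T) + #B := by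
    intro T hT hlt hT'
    exact Nat.find_min hex (hSn ▸ hlt) ⟨T, hT, hT', rfl⟩
  refine ⟨S, hSB, hS, ?_⟩
  rcases S.eq_empty_or_nonempty with rfl | hne
  · simp [nbrs]; omega
  have hsh := h.card_shared_lt hSB (hne.mono hSB)
  refine ⟨?_, by omega⟩
  obtain ⟨v, hvS, hv⟩ := h.exists_card_shared_le_one hSB hne
  have h1 := hmin (S.erase v) ((erase_subset _ _).trans hSB) (card_erase_lt_of_mem hvS)
  have h2 := hcase v (hSB hvS)
  have h3 := card_erase_add_one hvS
  -- A private neighbor of `S` that is lost on deleting `v` is private to `v` or shared with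
  -- `S \ {v}`, and at most one is shared. By minimality the first bound then holds for `S` with an
  -- excess of less than `s₁ - #B`.
  have h4 : #(privateNbrs G A B S) ≤ #(privateNbrs G A B (S.erase v)) +
      #(privateNbrs G A B {v}) + 1 := by
    refine le_trans (card_le_card (t := (privateNbrs G A B (S.erase v) ∪ privateNbrs G A B {v}) ∪
      {x ∈ A | G.Adj v x ∧ ∃ u ∈ S, u ≠ v ∧ G.Adj u x}) ?_) ?_
    · intro x hx
      simp only [privateNbrs, nbrs, mem_sdiff, mem_filter, mem_union, mem_erase,
        mem_singleton] at hx ⊢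
      grind
    · have e1 := card_union_le (privateNbrs G A B (S.erase v) ∪ privateNbrs G A B {v})
        {x ∈ A | G.Adj v x ∧ ∃ u ∈ S, u ≠ v ∧ G.Adj u x}
      have e2 := card_union_le (privateNbrs G A B (S.erase v)) (privateNbrs G A B {v})
      omega
  have h5 : #(nbrs G A S) ≤ #(privateNbrs G A B S) + #(nbrs G A S ∩ nbrs G A (B \ S)) := by
    refine le_trans (card_le_card (t := privateNbrs G A B S ∪
      (nbrs G A S ∩ nbrs G A (B \ S))) ?_) (card_union_le _ _)
    intro x hx
    simp only [privateNbrs, mem_union, mem_inter, mem_sdiff]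
    have : x ∈ A := (mem_filter.1 hx).1
    tauto
  omega

/-- Hall's theorem for two sets, with `p` representatives of `X` and `q` of `Y`. -/
lemma exists_disjoint_subsets_card_eq {X Y : Finset V} {p q : ℕ} (hp : p ≤ #X) (hq : q ≤ #Y)
    (hpq : p + q ≤ #(X ∪ Y)) :
    ∃ P ⊆ X, ∃ Q ⊆ Y, Disjoint P Q ∧ #P = p ∧ #Q = q := by
  rcases le_total p #(X \ Y) with hle | hle
  · obtain ⟨P, hP, hPc⟩ := exists_subset_card_eq hle
    obtain ⟨Q, hQ, hQc⟩ := exists_subset_card_eq hq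
    refine ⟨P, hP.trans sdiff_subset, Q, hQ, ?_, hPc, hQc⟩
    exact disjoint_of_subset_left hP (disjoint_of_subset_right hQ sdiff_disjoint)
  · -- `P` uses up `X \ Y`, so all of `(X ∪ Y) \ P` is available to `Q`.
    obtain ⟨P, hP1, hP2, hPc⟩ := exists_subsuperset_card_eq (sdiff_subset (s := X) (t := Y)) hle hp
    have hY : Y \ P = (X ∪ Y) \ P := by
      ext x
      have := @hP1 x
      simp only [mem_sdiff, mem_union] at this ⊢
      tauto
    have : q ≤ #(Y \ P) := by
      rw [hY, card_sdiff_of_subset (hP2.trans subset_union_left)]; omega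
    obtain ⟨Q, hQ, hQc⟩ := exists_subset_card_eq this
    refine ⟨P, hP2, Q, hQ.trans sdiff_subset, ?_, hPc, hQc⟩
    exact disjoint_of_subset_right hQ disjoint_sdiff

/-- `C` is an independent set of `G`, as a `Finset`. -/
def Indep (G : SimpleGraph V) (C : Finset V) : Prop := ∀ u ∈ C, ∀ w ∈ C, ¬ G.Adj u w

/-- If `#B ≤ s₃`, then `A ∪ B` splits into independent classes `C₁`, `C₂` and the rest, the first two
being the parts of `B` enlarged by vertices of `A`, the rest lying in `A`. -/
lemma exists_three_classes_of_small (h : SparseBetween G A B) (hAB : Disjoint A B)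
    (hA : Indep G A) (hB : Indep G B)
    {s₁ s₂ s₃ : ℕ} (h12 : s₂ ≤ s₁) (h23 : s₃ ≤ s₂) (h13 : s₁ ≤ s₃ + 1)
    (hcard : #A + #B = s₁ + s₂ + s₃) (hb : #B ≤ s₃)
    (hdeg : ∀ v ∈ B, #{x ∈ A | G.Adj v x} ≤ s₃) :
    ∃ C₁ ⊆ A ∪ B, ∃ C₂ ⊆ (A ∪ B) \ C₁, Indep G C₁ ∧ Indep G C₂ ∧
      Indep G (((A ∪ B) \ C₁) \ C₂) ∧ #C₁ = s₁ ∧ #C₂ = s₂ := by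
  obtain ⟨S, hSB, hS1, hS2, hS3⟩ := h.exists_split h12 h23 h13 hcard hb hdeg
  have hSc : #(B \ S) = #B - #S := card_sdiff_of_subset hSB
  have hSle := card_le_card hSB
  have hNA : nbrs G A S ⊆ A := filter_subset _ _
  have hNc : #(A \ nbrs G A S) = #A - #(nbrs G A S) := card_sdiff_of_subset hNA
  have hNle := card_le_card hNA
  have hU : privateNbrs G A B S ∪ (A \ nbrs G A S) = A \ (nbrs G A S ∩ nbrs G A (B \ S)) := by
    ext x; simp only [privateNbrs, mem_union, mem_sdiff, mem_inter]; tauto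
  have hUc : #(A \ (nbrs G A S ∩ nbrs G A (B \ S))) =
      #A - #(nbrs G A S ∩ nbrs G A (B \ S)) :=
    card_sdiff_of_subset (inter_subset_left.trans hNA)
  obtain ⟨P, hP, Q, hQ, hPQ, hPc, hQc⟩ := exists_disjoint_subsets_card_eq
    (X := privateNbrs G A B S) (Y := A \ nbrs G A S) (p := s₁ - #(B \ S)) (q := s₂ - #S)
    (by omega) (by omega) (by rw [hU, hUc]; omega)
  have hPA : P ⊆ A := hP.trans sdiff_subset
  have hQA : Q ⊆ A := hQ.trans sdiff_subset
  have hPN : ∀ x ∈ P, ∀ u ∈ B \ S, ¬ G.Adj u x := by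
    intro x hx u hu hux
    have h1 := hP hx
    simp only [privateNbrs, nbrs, mem_sdiff, mem_filter] at h1
    exact h1.2 ⟨h1.1, u, mem_sdiff.1 hu, hux⟩
  have hQN : ∀ x ∈ Q, ∀ u ∈ S, ¬ G.Adj u x := by
    intro x hx u hu hux
    have h1 := hQ hx
    simp only [nbrs, mem_sdiff, mem_filter] at h1
    exact h1.2 ⟨h1.1, u, hu, hux⟩
  have hdis := disjoint_left.1 hAB
  have hdis2 := disjoint_left.1 hPQ
  refine ⟨(B \ S) ∪ P, ?_, S ∪ Q, ?_, ?_, ?_, ?_, ?_, ?_⟩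
  · intro x hx
    have := @hPA x
    simp only [mem_union, mem_sdiff] at hx ⊢
    tauto
  · intro x hx
    have := @hPA x
    have := @hQA x
    have := @hSB x
    have := @hdis x
    have := @hdis2 x
    simp only [mem_union, mem_sdiff] at hx ⊢
    tauto
  · intro u hu w hw huw
    rcases mem_union.1 hu with hu | hu <;> rcases mem_union.1 hw with hw | hw
    · exact hB u (sdiff_subset hu) w (sdiff_subset hw) huw
    · exact hPN w hw u hu huw
    · exact hPN u hu w hw huw.symm
    · exact hA u (hPA hu) w (hPA hw) huw
  · intro u hu w hw huw
    rcases mem_union.1 hu with hu | hu <;> rcases mem_union.1 hw with hw | hw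
    · exact hB u (hSB hu) w (hSB hw) huw
    · exact hQN w hw u hu huw
    · exact hQN u hu w hw huw.symm
    · exact hA u (hQA hu) w (hQA hw) huw
  · have : ∀ x ∈ ((A ∪ B) \ (B \ S ∪ P)) \ (S ∪ Q), x ∈ A := by
      intro x hx
      simp only [mem_union, mem_sdiff] at hx
      tauto
    exact fun u hu w hw => hA u (this u hu) w (this w hw)
  · rw [card_union_of_disjoint, hPc]
    · omega
    · exact (disjoint_of_subset_left hPA (disjoint_of_subset_right sdiff_subset hAB)).symm
  · rw [card_union_of_disjoint, hQc]
    · omega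
    · exact (disjoint_of_subset_left hQA (disjoint_of_subset_right hSB hAB)).symm

/-- Some `t`-element subset of `S` has total weight at most `t` times the average weight over `S`. -/
lemma exists_subset_card_eq_mul_sum_le (f : V → ℕ) (S : Finset V) {t : ℕ} (ht : t ≤ #S) :
    ∃ T ⊆ S, #T = t ∧ #S * ∑ v ∈ T, f v ≤ t * ∑ v ∈ S, f v := by
  induction ht using Nat.decreasingInduction with
  | self => exact ⟨S, subset_rfl, rfl, le_rfl⟩
  | of_succ t ht ih =>
    obtain ⟨T, hT, hTc, hle⟩ := ih
    obtain ⟨v, hv, hmax⟩ := exists_max_image T f (card_pos.1 (by omega))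
    refine ⟨T.erase v, (erase_subset _ _).trans hT, by rw [card_erase_of_mem hv]; omega, ?_⟩
    -- Deleting the heaviest of `t + 1` vertices keeps at most the fraction `t / (t + 1)` of the weight.
    have hsum := add_sum_erase T f hv
    have hv' : ∑ u ∈ T.erase v, f u ≤ t * f v := by
      have := sum_le_card_nsmul (T.erase v) f (f v) fun u hu => hmax u (mem_of_mem_erase hu)
      rwa [card_erase_of_mem hv, hTc, smul_eq_mul] at this
    rw [← hsum] at hle
    generalize ∑ u ∈ T.erase v, f u = e at *
    generalize ∑ u ∈ S, f u = F at *
    refine Nat.le_of_mul_le_mul_left (c := t + 1) ?_ (by omega)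
    have h1 : #S * e ≤ #S * (t * f v) := Nat.mul_le_mul_left _ hv'
    have h2 := Nat.mul_le_mul_left t hle
    calc (t + 1) * (#S * e) = t * (#S * e) + #S * e := by ring
      _ ≤ t * (#S * e) + #S * (t * f v) := by omega
      _ = t * (#S * (f v + e)) := by ring
      _ ≤ t * ((t + 1) * F) := h2
      _ = (t + 1) * (t * F) := by ring

/-- If both sides have at least `s₁` vertices, then `A ∪ B` splits into independent classes: `C₁ ⊆ B`,
`C₂ ⊆ A`, and a rest meeting both sides. The part `T` of the rest in `B` is chosen of small total
degree, so that `A` has enough vertices not adjacent to `T`. -/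
lemma exists_three_classes_of_large (h : SparseBetween G A B) (hAB : Disjoint A B)
    (hA : Indep G A) (hB : Indep G B)
    {s₁ s₂ s₃ : ℕ} (h12 : s₂ ≤ s₁) (h23 : s₃ ≤ s₂)
    (hcard : #A + #B = s₁ + s₂ + s₃) (hb : s₁ ≤ #B) (hba : #B ≤ #A) :
    ∃ C₁ ⊆ A ∪ B, ∃ C₂ ⊆ (A ∪ B) \ C₁, Indep G C₁ ∧ Indep G C₂ ∧
      Indep G (((A ∪ B) \ C₁) \ C₂) ∧ #C₁ = s₁ ∧ #C₂ = s₂ := by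
  obtain ⟨T, hTB, hTc, hT⟩ := exists_subset_card_eq_mul_sum_le
    (fun v => #{x ∈ A | G.Adj v x}) B (t := #B - s₁) (by omega)
  have hNA : nbrs G A T ⊆ A := filter_subset _ _
  have hN : #(nbrs G A T) ≤ ∑ v ∈ T, #{x ∈ A | G.Adj v x} := by
    refine le_trans (card_le_card ?_) card_biUnion_le
    intro x hx
    simpa [nbrs, and_left_comm] using hx
  have hNs : #(nbrs G A T) ≤ s₂ := by
    rcases B.eq_empty_or_nonempty with rfl | hBne
    · have : T = ∅ := by simpa using hTB
      simp [this, nbrs]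
    have he := h A subset_rfl B subset_rfl hBne
    have hbpos : 0 < #B := hBne.card_pos
    set D := ∑ v ∈ B, #{x ∈ A | G.Adj v x}
    set d := ∑ v ∈ T, #{x ∈ A | G.Adj v x}
    refine hN.trans ?_
    by_contra! hlt
    -- With `b = #B` and `n = s₁ + s₂ + s₃`, `2 * b ≤ n` gives `(b - s₁) * n ≤ b * (n - 2 * s₁)`,
    -- and `n - 2 * s₁ ≤ s₂`.
    obtain ⟨x, hx⟩ := Nat.exists_eq_add_of_le hb
    have hx' : #B - s₁ = x := by omega
    rw [hx'] at hT
    have e1 : #B * (s₂ + 1) ≤ #B * d := Nat.mul_le_mul_left _ hlt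
    have e2 : x * D ≤ x * (s₁ + s₂ + s₃) := Nat.mul_le_mul_left _ (by omega)
    have e3 : s₁ * (2 * #B) ≤ s₁ * (s₁ + s₂ + s₃) := Nat.mul_le_mul_left _ (by omega)
    have e4 : #B * s₃ ≤ #B * s₁ := Nat.mul_le_mul_left _ (by omega)
    rw [hx] at hT e1 e3 e4 hbpos
    nlinarith
  have hAc : #(A \ nbrs G A T) = #A - #(nbrs G A T) := card_sdiff_of_subset hNA
  have hNle := card_le_card hNA
  obtain ⟨A', hA', hA'c⟩ := exists_subset_card_eq (s := A \ nbrs G A T) (n := #A - s₂) (by omega)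
  have hA'A : A' ⊆ A := hA'.trans sdiff_subset
  have hA'N : ∀ x ∈ A', ∀ u ∈ T, ¬ G.Adj u x := by
    intro x hx u hu hux
    have h1 := hA' hx
    simp only [nbrs, mem_sdiff, mem_filter] at h1
    exact h1.2 ⟨h1.1, u, hu, hux⟩
  have hdis := disjoint_left.1 hAB
  refine ⟨B \ T, sdiff_subset.trans subset_union_right, A \ A', ?_, ?_, ?_, ?_, ?_, ?_⟩
  · intro x hx
    have := @hdis x
    simp only [mem_union, mem_sdiff] at hx ⊢
    tauto
  · exact fun u hu w hw => hB u (sdiff_subset hu) w (sdiff_subset hw)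
  · exact fun u hu w hw => hA u (sdiff_subset hu) w (sdiff_subset hw)
  · have hm : ∀ x ∈ ((A ∪ B) \ (B \ T)) \ (A \ A'), x ∈ A' ∨ x ∈ T := by
      intro x hx
      simp only [mem_union, mem_sdiff] at hx
      tauto
    intro u hu w hw huw
    rcases hm u hu with hu | hu <;> rcases hm w hw with hw | hw
    · exact hA u (hA'A hu) w (hA'A hw) huw
    · exact hA'N u hu w hw huw.symm
    · exact hA'N w hw u hu huw
    · exact hB u (hTB hu) w (hTB hw) huw
  · rw [card_sdiff_of_subset hTB]; omega
  · rw [card_sdiff_of_subset hA'A]; omega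

end Bipartite

/-! ### Equitable colorings of forests -/

section Coloring

open Finset

/-- The graph induced on `W` has a proper coloring with colors `0, …, k - 1` in which all classes have
size `q` or `q + 1`. Colors outside `W` are arbitrary. -/
def EquitablyColorable {V : Type*} (G : SimpleGraph V) (W : Finset V) (k q : ℕ) : Prop :=
  ∃ c : V → ℕ, (∀ v ∈ W, c v < k) ∧ (∀ u ∈ W, ∀ w ∈ W, G.Adj u w → c u ≠ c w) ∧
    ∀ i < k, q ≤ #{v ∈ W | c v = i} ∧ #{v ∈ W | c v = i} ≤ q + 1

lemma EquitablyColorable.add_class {V : Type*} [DecidableEq V] {G : SimpleGraph V}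
    {W I : Finset V} {k q : ℕ} (hI : I ⊆ W) (hind : Indep G I)
    (hq : q ≤ #I) (hq' : #I ≤ q + 1) (h : EquitablyColorable G (W \ I) k q) :
    EquitablyColorable G W (k + 1) q := by
  obtain ⟨c, hc1, hc2, hc3⟩ := h
  refine ⟨fun v => if v ∈ I then k else c v, ?_, ?_, ?_⟩
  · intro v hv
    have := hc1 v
    simp only [mem_sdiff] at this
    grind
  · intro u hu w hw huw
    have h1 := hc1 u
    have h2 := hc1 w
    have h3 := hc2 u
    have h4 := hind u
    simp only [mem_sdiff] at h1 h2 h3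
    grind
  · intro i hi
    rcases Nat.lt_succ_iff_lt_or_eq.1 hi with hi | rfl
    · have : {v ∈ W | (if v ∈ I then k else c v) = i} = {v ∈ W \ I | c v = i} := by
        ext v
        simp only [mem_filter, mem_sdiff]
        split_ifs with h
        · simp [h]; omega
        · simp [h]
      rw [this]; exact hc3 i hi
    · have : {v ∈ W | (if v ∈ I then i else c v) = i} = I := by
        ext v
        have h1 := hc1 v
        have h2 := @hI v
        simp only [mem_filter, mem_sdiff] at h1 ⊢
        grind
      rw [this]; exact ⟨hq, hq'⟩

lemma equitablyColorable_empty {V : Type*} (G : SimpleGraph V) (q : ℕ) : EquitablyColorable G ∅ 0 q :=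
  ⟨fun _ => 0, by simp, by simp, by simp⟩

end Coloring

open Finset in
lemma SimpleGraph.IsAcyclic.exists_bipartition {V : Type*} [DecidableEq V] {G : SimpleGraph V}
    (hG : G.IsAcyclic) (W : Finset V) :
    ∃ A B : Finset V, A ∪ B = W ∧ Disjoint A B ∧ Indep G A ∧ Indep G B ∧ #B ≤ #A := by
  obtain ⟨c⟩ := hG.colorable_two
  have hun : ∀ i j : Fin 2, i ≠ j → {v ∈ W | c v = i} ∪ {v ∈ W | c v = j} = W := by
    intro i j hij
    ext v
    simp only [mem_union, mem_filter]
    have : c v = i ∨ c v = j := by omega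
    tauto
  have hdis : ∀ i j : Fin 2, i ≠ j →
      Disjoint ({v ∈ W | c v = i} : Finset V) {v ∈ W | c v = j} := by
    intro i j hij
    rw [Finset.disjoint_left]
    intro v h1 h2
    exact hij ((mem_filter.1 h1).2.symm.trans (mem_filter.1 h2).2)
  have hind : ∀ i : Fin 2, Indep G {v ∈ W | c v = i} := by
    intro i u hu w hw huw
    exact c.valid huw ((mem_filter.1 hu).2.trans (mem_filter.1 hw).2.symm)
  rcases le_total #{v ∈ W | c v = 0} #{v ∈ W | c v = 1} with h | h
  · exact ⟨_, _, hun 1 0 (by decide), hdis 1 0 (by decide), hind _, hind _, h⟩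
  · exact ⟨_, _, hun 0 1 (by decide), hdis 0 1 (by decide), hind _, hind _, h⟩

open Finset in
/-- For `k > 3` one class of size `q` or `q + 1` is cut out of the larger side of the bipartition, which
leaves a forest on fewer vertices with the same degree bound. -/
lemma SimpleGraph.IsAcyclic.equitablyColorable_three {V : Type*} [Fintype V] [DecidableEq V]
    {G : SimpleGraph V} [DecidableRel G.Adj] (hG : G.IsAcyclic) (W : Finset V) {q : ℕ}
    (hdeg : ∀ v, G.degree v ≤ q) (h1 : 3 * q ≤ #W) (h2 : #W ≤ 3 * (q + 1)) :
    EquitablyColorable G W 3 q := by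
  obtain ⟨A, B, rfl, hAB, hA, hB, hba⟩ := hG.exists_bipartition W
  have hc := card_union_of_disjoint hAB
  have hsp : SparseBetween G A B := fun X hX Y hY hne =>
    hG.sum_card_adj_add_one_le X Y
      (disjoint_of_subset_left hX (disjoint_of_subset_right hY hAB)) hne
  obtain ⟨s₁, s₂, s₃, h12, h23, h13, hq, hs⟩ : ∃ s₁ s₂ s₃ : ℕ, s₂ ≤ s₁ ∧ s₃ ≤ s₂ ∧ s₁ ≤ q + 1 ∧
      q ≤ s₃ ∧ #A + #B = s₁ + s₂ + s₃ := by
    have : #A + #B = 3 * q ∨ #A + #B = 3 * q + 1 ∨ #A + #B = 3 * q + 2 ∨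
      #A + #B = 3 * q + 3 := by omega
    rcases this with h | h | h | h
    · exact ⟨q, q, q, by omega⟩
    · exact ⟨q + 1, q, q, by omega⟩
    · exact ⟨q + 1, q + 1, q, by omega⟩
    · exact ⟨q + 1, q + 1, q + 1, by omega⟩
  have key : ∃ C₁ ⊆ A ∪ B, ∃ C₂ ⊆ (A ∪ B) \ C₁, Indep G C₁ ∧ Indep G C₂ ∧
      Indep G (((A ∪ B) \ C₁) \ C₂) ∧ #C₁ = s₁ ∧ #C₂ = s₂ := by
    rcases le_or_gt #B s₃ with hb | hb
    · refine exists_three_classes_of_small hsp hAB hA hB h12 h23 (by omega) hs hb fun v _ => ?_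
      refine le_trans ?_ ((hdeg v).trans hq)
      rw [← G.card_neighborFinset_eq_degree]
      exact card_le_card fun x hx => by simpa using (mem_filter.1 hx).2
    · exact exists_three_classes_of_large hsp hAB hA hB h12 h23 hs (by omega) hba
  obtain ⟨C₁, hC₁, C₂, hC₂, i1, i2, i3, e1, e2⟩ := key
  have e3 := card_sdiff_of_subset hC₁
  have e4 := card_sdiff_of_subset hC₂
  refine .add_class hC₁ i1 (by omega) (by omega) ?_
  refine .add_class hC₂ i2 (by omega) (by omega) ?_
  refine .add_class subset_rfl i3 (by omega) (by omega) ?_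
  simpa using equitablyColorable_empty G q

open Finset in
lemma SimpleGraph.IsAcyclic.equitablyColorable {V : Type*} [Fintype V] [DecidableEq V]
    {G : SimpleGraph V} [DecidableRel G.Adj] (hG : G.IsAcyclic) {q : ℕ}
    (hdeg : ∀ v, G.degree v ≤ q) {k : ℕ} (hk : 3 ≤ k) (W : Finset V)
    (h1 : k * q ≤ #W) (h2 : #W ≤ k * (q + 1)) :
    EquitablyColorable G W k q := by
  induction k, hk using Nat.le_induction generalizing W with
  | base => exact hG.equitablyColorable_three W hdeg h1 h2
  | succ k hk ih =>
    obtain ⟨A, B, hW, hAB, hA, -, hba⟩ := hG.exists_bipartition W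
    have hc := card_union_of_disjoint hAB
    rw [hW] at hc
    have hAW : A ⊆ W := hW ▸ subset_union_left
    have hm : 3 * q ≤ k * q := Nat.mul_le_mul_right q hk
    obtain ⟨s, hs1, hs2, hsA, hl, hu⟩ : ∃ s, q ≤ s ∧ s ≤ q + 1 ∧ s ≤ #A ∧
        k * q ≤ #W - s ∧ #W - s ≤ k * (q + 1) := by
      -- If `#W` is the maximum `(k + 1) * (q + 1)`, every class must have size `q + 1`.
      rcases eq_or_lt_of_le h2 with h | h
      · refine ⟨q + 1, by omega, le_rfl, ?_, ?_, ?_⟩ <;> grind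
      · refine ⟨q, le_rfl, by omega, ?_, ?_, ?_⟩ <;> grind
    obtain ⟨I, hI, hIc⟩ := exists_subset_card_eq hsA
    refine .add_class (hI.trans hAW) (fun u hu w hw => hA u (hI hu) w (hI hw)) (by omega)
      (by omega) (ih _ ?_ ?_)
    all_goals rw [card_sdiff_of_subset (hI.trans hAW), hIc]; assumption

theorem tree_stronglyKBalanced_of_maxDegree_le {V : Type*} [Fintype V] [DecidableEq V]
    (G : SimpleGraph V) [DecidableRel G.Adj] (hG : G.IsTree)
    (k : ℕ) (hk : 3 ≤ k)
    (hdeg : (G.maxDegree : ℝ) ≤ (Fintype.card V : ℝ) / (k : ℝ)) :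
    StronglyKBalanced k G := by
  have hkpos : 0 < k := by omega
  have hd : G.maxDegree ≤ Fintype.card V / k := by
    rw [Nat.le_div_iff_mul_le hkpos]
    rw [le_div_iff₀ (by exact_mod_cast hkpos)] at hdeg
    exact_mod_cast hdeg
  obtain ⟨c, hc1, hc2, hc3⟩ := hG.isAcyclic.equitablyColorable
    (fun v => (G.degree_le_maxDegree v).trans hd) hk Finset.univ
    (by simpa using Nat.mul_div_le _ _)
    (by simpa using (Nat.lt_mul_div_succ (Fintype.card V) hkpos).le)
  refine ⟨fun v => ⟨c v, hc1 v (Finset.mem_univ v)⟩, ?_, ?_⟩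
  · intro u w huw h
    exact hc2 u (Finset.mem_univ u) w (Finset.mem_univ w) huw (by simpa using h)
  · intro i j
    have key : ∀ i : Fin k, ({v | (⟨c v, hc1 v (Finset.mem_univ v)⟩ : Fin k) = i} : Set V).ncard =
        (Finset.univ.filter (fun v => c v = i)).card := by
      intro i
      rw [← Set.ncard_coe_finset]
      congr 1
      ext v
      simp [Fin.ext_iff]
    rw [key, key, abs_le]
    have hi := hc3 i i.2
    have hj := hc3 j j.2
    omega
end

section
/- Let G = (V,E) be a tree with n ≥ 2 vertices. If V' ⊆ V is a set of m pairwise non-adjacent vertices each of degree at most 2, then the induced forest on V \ V' (which has maximal degree at most d_max(G)) is a subgraph of some tree G₂ on n − m vertices with d_max(G₂) ≤ max(d_max(G), 1). -/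
/-!
Join two remaining vertices whenever they are adjacent in `G` or have a common neighbour among the
deleted ones (`bypass G s`), i.e. replace each path `a - u - b` through a deleted `u` by an edge.

* Degrees do not grow: send a new neighbour `w` of `v` to itself if `v` and `w` are adjacent in `G`,
  and otherwise to a deleted vertex between them. This is injective into the `G`-neighbours of `v`,
  since a deleted vertex has at most one neighbour besides `v`.
* The graph is connected: in a walk of `G` the deleted vertices occur isolated (they are pairwise
  non-adjacent), so each of them can be bypassed.

The induced forest is an acyclic subgraph of this connected graph, so it extends to a spanning tree
of it. That tree inherits the degree bound, and there is no need to show that `bypass G s` is itself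
acyclic.
-/

open SimpleGraph

/-- The graph on the complement of `s` in which distinct vertices are adjacent when they are
adjacent in `G` or have a common `G`-neighbour in `s`. -/
def bypass {V : Type*} [Fintype V] [DecidableEq V] (G : SimpleGraph V) (s : Finset V) :
    SimpleGraph ((↑(sᶜ) : Set V)) where
  Adj v w := v ≠ w ∧ (G.Adj v w ∨ ∃ u ∈ s, G.Adj v u ∧ G.Adj u w)
  symm := ⟨fun v w h => ⟨h.1.symm, h.2.imp (fun h => h.symm)
    (fun ⟨u, hu, h1, h2⟩ => ⟨u, hu, h2.symm, h1.symm⟩)⟩⟩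
  loopless := ⟨fun _ h => h.1 rfl⟩

section

variable {V : Type*} [Fintype V] [DecidableEq V] (G : SimpleGraph V) (s : Finset V)

lemma induce_le_bypass : G.induce (↑(sᶜ) : Set V) ≤ bypass G s :=
  fun _ _ h => ⟨h.ne, Or.inl h⟩

lemma eq_of_degree_le_two [DecidableRel G.Adj] {u v w w' : V} (h : G.degree u ≤ 2)
    (hv : G.Adj u v) (hw : G.Adj u w) (hw' : G.Adj u w') (h1 : v ≠ w) (h2 : v ≠ w') : w = w' := by
  by_contra h3
  have hsub : ({v, w, w'} : Finset V) ⊆ G.neighborFinset u := by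
    intro x hx
    simp only [Finset.mem_insert, Finset.mem_singleton] at hx
    rcases hx with rfl | rfl | rfl <;> simpa
  have hcard := Finset.card_le_card hsub
  rw [Finset.card_eq_three.mpr ⟨v, w, w', h1, h2, h3, rfl⟩, card_neighborFinset_eq_degree] at hcard
  omega

lemma ncard_neighborSet_bypass_le [DecidableRel G.Adj] (hdeg : ∀ u ∈ s, G.degree u ≤ 2)
    (v : ((↑(sᶜ) : Set V))) : ((bypass G s).neighborSet v).ncard ≤ G.degree v := by
  have key : ∀ w : ((↑(sᶜ) : Set V)), ∃ x : V, (bypass G s).Adj v w →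
      G.Adj v x ∧ (x = w ∨ (x ∈ s ∧ G.Adj x w)) := by
    intro w
    by_cases h : (bypass G s).Adj v w
    · rcases h.2 with h' | ⟨u, hu, h1, h2⟩
      · exact ⟨w, fun _ => ⟨h', Or.inl rfl⟩⟩
      · exact ⟨u, fun _ => ⟨h1, Or.inr ⟨hu, h2⟩⟩⟩
    · exact ⟨v, fun h' => absurd h' h⟩
  choose f hf using key
  have hs : ∀ w : ((↑(sᶜ) : Set V)), (w : V) ∉ s := fun w => by simpa using w.2
  rw [← card_neighborFinset_eq_degree, ← Set.ncard_coe_finset]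
  refine Set.ncard_le_ncard_of_injOn f (fun w hw => by simpa using (hf w hw).1) ?_
    (Finset.finite_toSet _)
  intro w hw w' hw' heq
  obtain ⟨ha, hb⟩ := hf w hw
  obtain ⟨ha', hb'⟩ := hf w' hw'
  rw [← heq] at ha' hb'
  apply Subtype.ext
  rcases hb with hb | ⟨hb, hc⟩ <;> rcases hb' with hb' | ⟨hb', hc'⟩
  · exact hb.symm.trans hb'
  · exact absurd (hb ▸ hb') (hs w)
  · exact absurd (hb' ▸ hb) (hs w')
  · exact eq_of_degree_le_two G (hdeg _ hb) ha.symm hc hc'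
      (fun h => hw.1 (Subtype.ext h)) (fun h => hw'.1 (Subtype.ext h))

/-- The second conjunct is what makes the induction pass through a deleted vertex: a walk of `G`
starting at such a vertex can be replaced by one starting at any of its remaining neighbours. -/
lemma reachable_bypass_of_walk (hindep : ∀ u ∈ s, ∀ w ∈ s, ¬ G.Adj u w) {x y : V}
    (p : G.Walk x y) (hy : y ∈ (↑(sᶜ) : Set V)) :
    (∀ hx : x ∈ (↑(sᶜ) : Set V), (bypass G s).Reachable ⟨x, hx⟩ ⟨y, hy⟩) ∧
    (x ∈ s → ∀ z, ∀ hz : z ∈ (↑(sᶜ) : Set V), G.Adj x z →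
      (bypass G s).Reachable ⟨z, hz⟩ ⟨y, hy⟩) := by
  induction p with
  | nil => exact ⟨fun _ => Reachable.refl _, fun hx => absurd hx (by simpa using hy)⟩
  | @cons a b c hab q ih =>
    obtain ⟨ih1, ih2⟩ := ih hy
    refine ⟨fun ha => ?_, fun ha z hz haz => ?_⟩
    · by_cases hb : b ∈ s
      · exact ih2 hb a ha hab.symm
      · have hb' : b ∈ (↑(sᶜ) : Set V) := by simpa using hb
        refine Reachable.trans (Adj.reachable ?_) (ih1 hb')
        exact ⟨fun h => hab.ne (congrArg Subtype.val h), Or.inl hab⟩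
    · have hb' : b ∈ (↑(sᶜ) : Set V) := by
        simpa using fun hb => hindep a ha b hb hab
      by_cases hzb : z = b
      · subst hzb
        exact ih1 hz
      · refine Reachable.trans (Adj.reachable ?_) (ih1 hb')
        exact ⟨fun h => hzb (congrArg Subtype.val h), Or.inr ⟨a, ha, haz.symm, hab⟩⟩

lemma connected_bypass (hG : G.Connected) (hn : 2 ≤ Fintype.card V)
    (hindep : ∀ u ∈ s, ∀ w ∈ s, ¬ G.Adj u w) : (bypass G s).Connected := by
  have : Nontrivial V := Fintype.one_lt_card_iff_nontrivial.mp hn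
  obtain ⟨v⟩ := hG.nonempty
  obtain ⟨w, hvw⟩ := hG.preconnected.exists_adj_of_nontrivial v
  have hne : Nonempty ((↑(sᶜ) : Set V)) := by
    by_cases hv : v ∈ s
    · exact ⟨⟨w, by simpa using fun hw => hindep v hv w hw hvw⟩⟩
    · exact ⟨⟨v, by simpa using hv⟩⟩
  refine (connected_iff _).mpr ⟨fun a b => ?_, hne⟩
  obtain ⟨p⟩ := hG.preconnected (a : V) b
  exact (reachable_bypass_of_walk G s hindep p b.2).1 a.2

end

theorem induced_forest_subgraph_of_tree {V : Type*} [Fintype V] [DecidableEq V]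
    (G : SimpleGraph V) [DecidableRel G.Adj] (hG : G.IsTree)
    (hn : 2 ≤ Fintype.card V) (s : Finset V) (m : ℕ) (hm : s.card = m)
    (hindep : ∀ u ∈ s, ∀ w ∈ s, ¬ G.Adj u w)
    (hdeg : ∀ u ∈ s, G.degree u ≤ 2) :
    (∀ v : ((↑(sᶜ) : Set V)), ((G.induce (↑(sᶜ) : Set V)).neighborSet v).ncard ≤ G.maxDegree) ∧
    ∃ G₂ : SimpleGraph ((↑(sᶜ) : Set V)),
      G₂.IsTree ∧
      Fintype.card ((↑(sᶜ) : Set V)) = Fintype.card V - m ∧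
      G.induce (↑(sᶜ) : Set V) ≤ G₂ ∧
      ∀ v : ((↑(sᶜ) : Set V)), (G₂.neighborSet v).ncard ≤ max G.maxDegree 1 := by
  have hbound : ∀ H ≤ bypass G s, ∀ v, (H.neighborSet v).ncard ≤ G.maxDegree := fun H hH v =>
    (Set.ncard_le_ncard (fun _ hw => hH hw) (Set.toFinite _)).trans
      ((ncard_neighborSet_bypass_le G s hdeg v).trans (G.degree_le_maxDegree v))
  refine ⟨hbound _ (induce_le_bypass G s), ?_⟩
  obtain ⟨F, hF1, hF2, hF3⟩ := (connected_bypass G s hG.connected hn hindep)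
    |>.exists_isTree_le_of_le_of_isAcyclic (induce_le_bypass G s) (hG.isAcyclic.induce _)
  refine ⟨F, hF3, ?_, hF1, fun v => (hbound F hF2 v).trans (le_max_left _ _)⟩
  rw [← hm, ← Finset.card_compl]
  exact Fintype.card_coe _
end
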